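/- arXiv:2011.03025 — 2 statements merged into one kernel-verified Lean document; each statement's English description precedes it below -/
import Mathlib

section
/- Let λ, c > 0 and t > 0, and let x ∈ (−1, 1) with sin(ct) ∉ {x, −x} and cos(ct) ≠ 0. Define F_t(y) := p_t((−∞, y]). Then the pushforward of p_t under the sine map satisfies (sin_* p_t)((−∞, x]) = ∑_{k ∈ ℤ} [ F_t(arcsin x + 2kπ) − F_t((2k − 1/2)π) + F_t((2k + 3/2)π) − F_t((2k+1)π − arcsin x) ], where the sum over ℤ has only finitely many nonzero terms (since p_t is supported in [−ct, ct]). -/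
/-!
The preimage of `(-∞, x]` under `sin` is cut along the intervals `((2k - 1/2)π, (2k + 3/2)π]`, which
tile `ℝ`. With `a = arcsin x`, the part in the `k`-th tile is the disjoint union of
`((2k - 1/2)π, a + 2kπ]` and `[(2k + 1)π - a, (2k + 3/2)π]`. Up to the left endpoint of the second
piece, both are half-open intervals, whose masses are differences of values of the distribution
function. These endpoints have sine `x`, so they differ from the atoms `± ct` of the telegraph law
and carry no mass; countable additivity then gives the series (`sin_cdf_of_finite`).

The distribution function is real-valued, so the argument needs the telegraph law to be finite.
This holds because `I₀(y) ≤ exp (y²/4)` and `I₁(y) ≤ (y/2) exp (y²/4)` for `y ≥ 0`, so that the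
density is bounded on `(-ct, ct)`, including the quotient `I₁(κ s)/s` near `s = 0`
(`telegraphLaw_finite`).
-/

open MeasureTheory Real

/-- Modified Bessel function of the first kind of order 0. -/
noncomputable def besselI0 (y : ℝ) : ℝ :=
  ∑' k : ℕ, (y / 2) ^ (2 * k) / ((Nat.factorial k : ℝ) ^ 2)

/-- Modified Bessel function of the first kind of order 1. -/
noncomputable def besselI1 (y : ℝ) : ℝ :=
  ∑' j : ℕ, (y / 2) ^ (2 * j + 1) / ((Nat.factorial j : ℝ) * (Nat.factorial (j + 1) : ℝ))

/-- The density `μ(x,t)` of the absolutely continuous part of the telegraph law. -/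
noncomputable def telegraphDensity (lam c x t : ℝ) : ℝ :=
  lam * Real.exp (-lam * t) / 2 *
    ((1 / c) * besselI0 (lam / c * Real.sqrt (c ^ 2 * t ^ 2 - x ^ 2)) +
      t * besselI1 (lam / c * Real.sqrt (c ^ 2 * t ^ 2 - x ^ 2)) /
        Real.sqrt (c ^ 2 * t ^ 2 - x ^ 2))

/-- The law of the telegraph process:
`p_t = (e^{−λt}/2)(δ_{−ct} + δ_{ct}) + μ(·,t)·1_{(−ct,ct)}·Leb`. -/
noncomputable def telegraphLaw (lam c t : ℝ) : MeasureTheory.Measure ℝ :=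
  ENNReal.ofReal (Real.exp (-lam * t) / 2) •
      (MeasureTheory.Measure.dirac (-(c * t)) + MeasureTheory.Measure.dirac (c * t)) +
    MeasureTheory.volume.withDensity fun x =>
      ENNReal.ofReal
        (Set.indicator (Set.Ioo (-(c * t)) (c * t)) (fun y => telegraphDensity lam c y t) x)

lemma besselI0_le (y : ℝ) : besselI0 y ≤ Real.exp ((y / 2) ^ 2) := by
  have hs := NormedSpace.expSeries_div_hasSum_exp (𝔸 := ℝ) ((y / 2) ^ 2)
  rw [← Real.exp_eq_exp_ℝ] at hs
  have hle : ∀ k : ℕ, (y / 2) ^ (2 * k) / ((Nat.factorial k : ℝ) ^ 2)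
      ≤ ((y / 2) ^ 2) ^ k / (Nat.factorial k : ℝ) := fun k => by
    have h1 : (1 : ℝ) ≤ Nat.factorial k := by exact_mod_cast Nat.factorial_pos k
    rw [pow_mul]
    gcongr
    nlinarith
  have hsum : Summable fun k : ℕ => (y / 2) ^ (2 * k) / ((Nat.factorial k : ℝ) ^ 2) :=
    Summable.of_nonneg_of_le (fun k => by rw [pow_mul]; positivity) hle hs.summable
  rw [besselI0, ← hs.tsum_eq]
  exact hsum.tsum_le_tsum hle hs.summable

lemma besselI1_le {y : ℝ} (hy : 0 ≤ y) : besselI1 y ≤ y / 2 * Real.exp ((y / 2) ^ 2) := by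
  have hs := NormedSpace.expSeries_div_hasSum_exp (𝔸 := ℝ) ((y / 2) ^ 2)
  rw [← Real.exp_eq_exp_ℝ] at hs
  replace hs := hs.mul_left (y / 2)
  have hle : ∀ k : ℕ, (y / 2) ^ (2 * k + 1) /
        ((Nat.factorial k : ℝ) * (Nat.factorial (k + 1) : ℝ))
      ≤ y / 2 * (((y / 2) ^ 2) ^ k / (Nat.factorial k : ℝ)) := fun k => by
    have h1 : (1 : ℝ) ≤ Nat.factorial (k + 1) := by exact_mod_cast Nat.factorial_pos (k + 1)
    have h2 : (0 : ℝ) < Nat.factorial k := by exact_mod_cast Nat.factorial_pos k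
    rw [pow_succ', pow_mul, mul_div_assoc]
    gcongr
    nlinarith
  have hsum : Summable fun k : ℕ => (y / 2) ^ (2 * k + 1) /
      ((Nat.factorial k : ℝ) * (Nat.factorial (k + 1) : ℝ)) :=
    Summable.of_nonneg_of_le (fun k => by positivity) hle hs.summable
  rw [besselI1, ← hs.tsum_eq]
  exact hsum.tsum_le_tsum hle hs.summable

/-- A bound uniform in `y`. With `s = √(c²t² - y²)`, the factor `s` in the bound for `I₁` cancels the
denominator, and `(λ/c) s ≤ λ t` controls the exponentials. -/
lemma telegraphDensity_le {lam c t y : ℝ} (hlam : 0 < lam) (hc : 0 < c) (ht : 0 < t)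
    (hy : y ∈ Set.Ioo (-(c * t)) (c * t)) :
    telegraphDensity lam c y t ≤ lam * Real.exp (-lam * t) / 2 *
      ((1 / c) * Real.exp ((lam * t / 2) ^ 2)
        + t * (lam / c / 2 * Real.exp ((lam * t / 2) ^ 2))) := by
  have hpos : 0 < c ^ 2 * t ^ 2 - y ^ 2 := by nlinarith [hy.1, hy.2]
  unfold telegraphDensity
  set s := Real.sqrt (c ^ 2 * t ^ 2 - y ^ 2) with hs
  have hs0 : 0 < s := Real.sqrt_pos.2 hpos
  have hsle : s ≤ c * t := Real.sqrt_le_iff.2 ⟨by positivity, by nlinarith [sq_nonneg y]⟩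
  have hE : Real.exp ((lam / c * s / 2) ^ 2) ≤ Real.exp ((lam * t / 2) ^ 2) := by
    have : lam / c * s ≤ lam * t := by
      calc lam / c * s ≤ lam / c * (c * t) := by gcongr
        _ = lam * t := by field_simp
    gcongr
  have h0 := (besselI0_le (lam / c * s)).trans hE
  have h1 : besselI1 (lam / c * s) / s ≤ lam / c / 2 * Real.exp ((lam * t / 2) ^ 2) := by
    rw [div_le_iff₀ hs0]
    calc _ ≤ lam / c * s / 2 * Real.exp ((lam / c * s / 2) ^ 2) := besselI1_le (by positivity)
      _ ≤ lam / c * s / 2 * Real.exp ((lam * t / 2) ^ 2) := by gcongr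
      _ = _ := by ring
  rw [mul_div_assoc t]
  gcongr

lemma telegraphLaw_finite {lam c t : ℝ} (hlam : 0 < lam) (hc : 0 < c) (ht : 0 < t) :
    IsFiniteMeasure (telegraphLaw lam c t) := by
  refine ⟨?_⟩
  obtain ⟨C, hC⟩ : ∃ C, ∀ y ∈ Set.Ioo (-(c * t)) (c * t), telegraphDensity lam c y t ≤ C :=
    ⟨_, fun y hy => telegraphDensity_le hlam hc ht hy⟩
  have hle : ∀ y, ENNReal.ofReal
        (Set.indicator (Set.Ioo (-(c * t)) (c * t)) (fun y => telegraphDensity lam c y t) y)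
      ≤ (Set.Ioo (-(c * t)) (c * t)).indicator (fun _ => ENNReal.ofReal C) y := fun y => by
    by_cases hy : y ∈ Set.Ioo (-(c * t)) (c * t)
    · simpa only [Set.indicator_of_mem hy] using ENNReal.ofReal_le_ofReal (hC y hy)
    · simp [Set.indicator_of_notMem hy]
  have hfin := lintegral_mono (μ := volume) hle
  rw [lintegral_indicator_const measurableSet_Ioo, Real.volume_Ioo] at hfin
  have h2 := hfin.trans_lt (ENNReal.mul_lt_top ENNReal.ofReal_lt_top ENNReal.ofReal_lt_top)
  simp only [telegraphLaw, Measure.add_apply, Measure.smul_apply, smul_eq_mul, measure_univ,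
    withDensity_apply _ MeasurableSet.univ, Measure.restrict_univ]
  exact ENNReal.add_lt_top.2 ⟨ENNReal.mul_lt_top ENNReal.ofReal_lt_top (by simp), h2⟩

lemma telegraphLaw_singleton {lam c t y : ℝ} (h1 : y ≠ c * t) (h2 : y ≠ -(c * t)) :
    telegraphLaw lam c t {y} = 0 := by
  have h3 : (volume.withDensity fun x => ENNReal.ofReal
      (Set.indicator (Set.Ioo (-(c * t)) (c * t)) (fun y => telegraphDensity lam c y t) x)) {y}
      = 0 := withDensity_absolutelyContinuous _ _ (by simp)
  simp [telegraphLaw, h3, h1.symm, h2.symm]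

/-- The part of `{y | sin y ≤ x}` in the `k`-th tile `((2k - 1/2)π, (2k + 3/2)π]`, with `a` standing
for `arcsin x` and the point `(2k + 1)π - a` left out. -/
def sinPiece (a : ℝ) (k : ℤ) : Set ℝ :=
  Set.Ioc ((2 * (k : ℝ) - 1 / 2) * π) (a + 2 * (k : ℝ) * π) ∪
    Set.Ioc ((2 * (k : ℝ) + 1) * π - a) ((2 * (k : ℝ) + 3 / 2) * π)

lemma sin_le_iff_of_mem_Ioc {x z : ℝ} (hx : x ∈ Set.Ioo (-1 : ℝ) 1)
    (hz : z ∈ Set.Ioc (-(π / 2)) (3 * π / 2)) :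
    Real.sin z ≤ x ↔ z ≤ Real.arcsin x ∨ π - Real.arcsin x ≤ z := by
  obtain ⟨h1, h2⟩ := hz
  have ha := Real.arcsin_le_pi_div_two x
  -- Beyond `π / 2`, reflect by `z ↦ π - z`, which lands in `[-π/2, π/2)`, where `arcsin` inverts `sin`.
  rcases le_or_gt z (π / 2) with h | h
  · rw [← Real.le_arcsin_iff_sin_le' ⟨h1, h⟩]
    refine ⟨Or.inl, fun h' => h'.elim id fun h' => by linarith⟩
  · rw [← Real.sin_pi_sub,
      ← Real.le_arcsin_iff_sin_le ⟨by linarith, by linarith⟩ (Set.Ioo_subset_Icc_self hx)]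
    constructor
    · intro h'; right; linarith
    · rintro (h' | h') <;> linarith

/-- The series for the distribution function of `sin` holds for every finite measure without atoms
on the level set `{y | sin y = x}`; nothing else about the telegraph law enters. -/
theorem sin_cdf_of_finite (μ : Measure ℝ) [IsFiniteMeasure μ] {x : ℝ}
    (hx : x ∈ Set.Ioo (-1 : ℝ) 1) (hμ : ∀ y, Real.sin y = x → μ {y} = 0) :
    μ.real (Real.sin ⁻¹' Set.Iic x) = ∑' k : ℤ,
      (μ.real (Set.Iic (Real.arcsin x + 2 * (k : ℝ) * π))
        - μ.real (Set.Iic ((2 * (k : ℝ) - 1 / 2) * π))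
        + μ.real (Set.Iic ((2 * (k : ℝ) + 3 / 2) * π))
        - μ.real (Set.Iic ((2 * (k : ℝ) + 1) * π - Real.arcsin x))) := by
  have hsina : Real.sin (Real.arcsin x) = x := Real.sin_arcsin hx.1.le hx.2.le
  have ha1 : -(π / 2) < Real.arcsin x := Real.neg_pi_div_two_lt_arcsin.2 hx.1
  have ha2 : Real.arcsin x < π / 2 := Real.arcsin_lt_pi_div_two.2 hx.2
  set a := Real.arcsin x with ha
  have hpi := Real.pi_pos
  have hsub : ∀ k : ℤ, sinPiece a k ⊆
      Set.Ioc (-(π / 2) + k • (2 * π)) (-(π / 2) + (k + 1) • (2 * π)) := by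
    rintro k y (⟨h1, h2⟩ | ⟨h1, h2⟩) <;> constructor <;> push_cast [zsmul_eq_mul] <;> linarith
  have hdisj : Pairwise (Function.onFun Disjoint (sinPiece a)) := fun i j hij =>
    (Set.pairwise_disjoint_Ioc_add_zsmul (-(π / 2)) (2 * π) hij).mono (hsub i) (hsub j)
  have hmeas : ∀ k, MeasurableSet (sinPiece a k) := fun k =>
    measurableSet_Ioc.union measurableSet_Ioc
  have hsin_sub : ∀ (y : ℝ) (k : ℤ), Real.sin (y - 2 * k * π) = Real.sin y := fun y k => by
    rw [show y - 2 * k * π = y - k * (2 * π) by ring, Real.sin_sub_int_mul_two_pi]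
  have hN : μ (⋃ k : ℤ, {(2 * (k : ℝ) + 1) * π - a}) = 0 := by
    refine measure_iUnion_null fun k => hμ _ ?_
    rw [← hsin_sub _ k, show (2 * (k : ℝ) + 1) * π - a - 2 * k * π = π - a by ring,
      Real.sin_pi_sub, hsina]
  have hpiece : ∀ k y, y ∈ sinPiece a k → Real.sin y ≤ x := by
    intro k y hy
    have hy' := hsub k hy
    push_cast [zsmul_eq_mul] at hy'
    rw [← hsin_sub y k, sin_le_iff_of_mem_Ioc hx ⟨by linarith [hy'.1], by linarith [hy'.2]⟩]
    rcases hy with ⟨h1, h2⟩ | ⟨h1, h2⟩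
    · left; linarith
    · right; linarith
  have hcover : Real.sin ⁻¹' Set.Iic x ⊆
      (⋃ k, sinPiece a k) ∪ ⋃ k : ℤ, {(2 * (k : ℝ) + 1) * π - a} := by
    intro y hy
    have hy1 : y ∈ ⋃ k : ℤ, Set.Ioc (-(π / 2) + k • (2 * π)) (-(π / 2) + (k + 1) • (2 * π)) := by
      rw [iUnion_Ioc_add_zsmul (by positivity)]; trivial
    obtain ⟨k, hk⟩ := Set.mem_iUnion.1 hy1
    push_cast [zsmul_eq_mul] at hk
    have hy2 : Real.sin y ≤ x := hy
    rw [← hsin_sub y k, sin_le_iff_of_mem_Ioc hx ⟨by linarith [hk.1], by linarith [hk.2]⟩] at hy2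
    rcases hy2 with h | h
    · exact Or.inl (Set.mem_iUnion.2 ⟨k, Or.inl ⟨by linarith [hk.1], by linarith⟩⟩)
    · rcases h.eq_or_lt with h | h
      · refine Or.inr (Set.mem_iUnion.2 ⟨k, ?_⟩)
        rw [Set.mem_singleton_iff]; linarith
      · exact Or.inl (Set.mem_iUnion.2 ⟨k, Or.inr ⟨by linarith, by linarith [hk.2]⟩⟩)
  have heq : μ (Real.sin ⁻¹' Set.Iic x) = μ (⋃ k, sinPiece a k) := by
    refine le_antisymm ((measure_mono hcover).trans ?_)
      (measure_mono (Set.iUnion_subset fun k y hy => hpiece k y hy))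
    exact (measure_union_le _ _).trans (by rw [hN, add_zero])
  have hIoc : ∀ u v : ℝ, u ≤ v →
      μ.real (Set.Ioc u v) = μ.real (Set.Iic v) - μ.real (Set.Iic u) := fun u v huv => by
    rw [← Set.Iic_sdiff_Iic, measureReal_sdiff (Set.Iic_subset_Iic.2 huv) measurableSet_Iic]
  rw [measureReal_def, heq, measure_iUnion hdisj hmeas,
    ENNReal.tsum_toReal_eq fun k => measure_ne_top _ _]
  refine tsum_congr fun k => ?_
  rw [← measureReal_def, sinPiece, measureReal_union ?_ measurableSet_Ioc,
    hIoc _ _ (by linarith), hIoc _ _ (by linarith)]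
  · ring
  · refine Set.disjoint_left.2 fun y hy hy' => ?_
    linarith [hy.2, hy'.1]

/-- CDF of the sine component `Z₂(t) = sin X(t)` of the circular telegraph process:
`P(sin X(t) ≤ x) = ∑_{k∈ℤ}[F_t(arcsin x + 2kπ) − F_t((2k−1/2)π) + F_t((2k+3/2)π) − F_t((2k+1)π − arcsin x)]`. -/
theorem sin_telegraph_cdf
    (lam c t : ℝ) (hlam : 0 < lam) (hc : 0 < c) (ht : 0 < t)
    (x : ℝ) (hx : x ∈ Set.Ioo (-1 : ℝ) 1)
    (hsin : Real.sin (c * t) ≠ x ∧ Real.sin (c * t) ≠ -x)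
    (hcos : Real.cos (c * t) ≠ 0)
    (F : ℝ → ℝ) (hF : ∀ y, F y = ((telegraphLaw lam c t) (Set.Iic y)).toReal) :
    ((Measure.map Real.sin (telegraphLaw lam c t)) (Set.Iic x)).toReal
      = ∑' k : ℤ,
          (F (Real.arcsin x + 2 * (k : ℝ) * Real.pi)
            - F ((2 * (k : ℝ) - 1 / 2) * Real.pi)
            + F ((2 * (k : ℝ) + 3 / 2) * Real.pi)
            - F ((2 * (k : ℝ) + 1) * Real.pi - Real.arcsin x)) := by
  have := telegraphLaw_finite hlam hc ht
  rw [Measure.map_apply Real.measurable_sin measurableSet_Iic]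
  simp only [hF]
  refine sin_cdf_of_finite (telegraphLaw lam c t) hx fun y hy => telegraphLaw_singleton ?_ ?_
  · rintro rfl
    exact hsin.1 hy
  · rintro rfl
    rw [Real.sin_neg] at hy
    exact hsin.2 (by linarith)
end

section
/- Let λ, c > 0 and t > 0. Then the pushforward of the telegraph law p_t under the sine map decomposes as sin_* p_t = (e^{−λt}/2)·(δ_{sin(ct)} + δ_{−sin(ct)}) + η_t·1_{(−1,1)}·Leb, where the density of the absolutely continuous part is η_t(x) := (1−x²)^{−1/2}·∑_{k ∈ ℤ} [ μ(arcsin x + 2kπ, t)·1_{|arcsin x + 2kπ| < ct} + μ((2k+1)π − arcsin x, t)·1_{|(2k+1)π − arcsin x| < ct} ] for x ∈ (−1,1). -/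
/-!
Up to the null set of odd multiples of `π / 2`, the line is
the disjoint union of the intervals of length `π` centred at `2kπ` and at `(2k+1)π`. On the first
kind `sin` is inverted by `x ↦ 2kπ + arcsin x`, on the second by `x ↦ (2k+1)π - arcsin x`, and both
inverses have Jacobian `(1 - x²)^(-1/2)` on `(-1, 1)`. Changing variables on each interval and
summing (`lintegral_eq_lintegral_tsum_arcsin`) identifies the push-forward under `sin` of any
absolutely continuous measure (`map_sin_withDensity`).

Specialising to the telegraph density is a matter of moving `ENNReal.ofReal` through the real series
defining `η`: its terms are nonnegative, and for each `x` only finitely many of them are nonzero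
because the density is cut off outside the bounded interval `(-ct, ct)`.
-/

open MeasureTheory Real

/-- Change of variables on one branch of the inverse sine, `ε = 1` giving the increasing branches
and `ε = -1` the decreasing ones. -/
lemma lintegral_Ioc_eq_arcsin_branch (a ε : ℝ) (hε : ε = 1 ∨ ε = -1) (F : ℝ → ENNReal) :
    ∫⁻ y in Set.Ioc (a - π / 2) (a + π / 2), F y =
      ∫⁻ x in Set.Ioo (-1 : ℝ) 1,
        ENNReal.ofReal (√(1 - x ^ 2))⁻¹ * F (a + ε * Real.arcsin x) := by
  have hεε : ε * ε = 1 := by rcases hε with rfl | rfl <;> norm_num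
  have himg : (fun x => a + ε * Real.arcsin x) '' Set.Ioo (-1 : ℝ) 1
      = Set.Ioo (a - π / 2) (a + π / 2) := by
    ext y
    constructor
    · rintro ⟨x, ⟨h1, h2⟩, rfl⟩
      have h3 := Real.neg_pi_div_two_lt_arcsin.2 h1
      have h4 := Real.arcsin_lt_pi_div_two.2 h2
      rcases hε with rfl | rfl <;> constructor <;> dsimp only <;> linarith
    · rintro ⟨h1, h2⟩
      have h3 : -(π / 2) < ε * (y - a) ∧ ε * (y - a) < π / 2 := by
        rcases hε with rfl | rfl <;> constructor <;> linarith
      have harc := Real.arcsin_sin h3.1.le h3.2.le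
      refine ⟨Real.sin (ε * (y - a)), ⟨?_, ?_⟩, ?_⟩
      · rw [← Real.neg_pi_div_two_lt_arcsin, harc]; exact h3.1
      · rw [← Real.arcsin_lt_pi_div_two, harc]; exact h3.2
      · dsimp only
        rw [harc, ← mul_assoc, hεε]; ring
  rw [← setLIntegral_congr Ioo_ae_eq_Ioc, ← himg,
    lintegral_image_eq_lintegral_abs_deriv_mul (f' := fun x => ε * (1 / √(1 - x ^ 2)))
      measurableSet_Ioo]
  · refine lintegral_congr fun x => ?_
    have habs : |ε| = 1 := by rcases hε with rfl | rfl <;> simp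
    rw [abs_mul, habs, one_mul, one_div, abs_of_nonneg (by positivity)]
  · intro x hx
    exact (((Real.hasDerivAt_arcsin hx.1.ne' hx.2.ne).const_mul ε).const_add a).hasDerivWithinAt
  · intro x hx y hy hxy
    have h0 : ε ≠ 0 := by rintro rfl; simp at hεε
    exact Real.injOn_arcsin ⟨hx.1.le, hx.2.le⟩ ⟨hy.1.le, hy.2.le⟩
      (mul_left_cancel₀ h0 (add_left_cancel hxy))

/-- Integration over the line, folded onto `(-1, 1)` along all the branches of the inverse sine. -/
lemma lintegral_eq_lintegral_tsum_arcsin (F : ℝ → ENNReal) (hF : Measurable F) :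
    ∫⁻ y, F y = ∫⁻ x in Set.Ioo (-1 : ℝ) 1, ENNReal.ofReal (√(1 - x ^ 2))⁻¹ *
      ∑' k : ℤ, (F (Real.arcsin x + 2 * (k : ℝ) * π) +
        F ((2 * (k : ℝ) + 1) * π - Real.arcsin x)) := by
  have hterm : ∀ k : ℤ,
      ∫⁻ y in Set.Ioc (-(π / 2) + k • (2 * π)) (-(π / 2) + (k + 1) • (2 * π)), F y =
      ∫⁻ x in Set.Ioo (-1 : ℝ) 1, ENNReal.ofReal (√(1 - x ^ 2))⁻¹ *
        (F (Real.arcsin x + 2 * (k : ℝ) * π) +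
          F ((2 * (k : ℝ) + 1) * π - Real.arcsin x)) := by
    intro k
    have hsplit : Set.Ioc (-(π / 2) + k • (2 * π)) (-(π / 2) + (k + 1) • (2 * π)) =
        Set.Ioc (2 * (k : ℝ) * π - π / 2) (2 * (k : ℝ) * π + π / 2) ∪
        Set.Ioc ((2 * (k : ℝ) + 1) * π - π / 2) ((2 * (k : ℝ) + 1) * π + π / 2) := by
      have e : (2 * (k : ℝ) + 1) * π - π / 2 = 2 * (k : ℝ) * π + π / 2 := by ring
      rw [e, Set.Ioc_union_Ioc_eq_Ioc (by linarith [pi_pos]) (by linarith [pi_pos])]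
      congr 1 <;> simp only [zsmul_eq_mul] <;> push_cast <;> ring
    have hdisj : Disjoint (Set.Ioc (2 * (k : ℝ) * π - π / 2) (2 * (k : ℝ) * π + π / 2))
        (Set.Ioc ((2 * (k : ℝ) + 1) * π - π / 2) ((2 * (k : ℝ) + 1) * π + π / 2)) :=
      Set.Ioc_disjoint_Ioc_of_le (by linarith)
    rw [hsplit, lintegral_union measurableSet_Ioc hdisj,
      lintegral_Ioc_eq_arcsin_branch _ 1 (Or.inl rfl),
      lintegral_Ioc_eq_arcsin_branch _ (-1) (Or.inr rfl), ← lintegral_add_left (by fun_prop)]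
    refine lintegral_congr fun x => ?_
    rw [mul_add]
    congr 3 <;> ring
  have hmeas : ∀ k : ℤ, Measurable fun x : ℝ => ENNReal.ofReal (√(1 - x ^ 2))⁻¹ *
      (F (Real.arcsin x + 2 * (k : ℝ) * π) + F ((2 * (k : ℝ) + 1) * π - Real.arcsin x)) :=
    fun k => by fun_prop
  rw [← setLIntegral_univ, ← iUnion_Ioc_add_zsmul Real.two_pi_pos (-(π / 2)),
    lintegral_iUnion (fun _ => measurableSet_Ioc)
      (Set.pairwise_disjoint_Ioc_add_zsmul (-(π / 2)) (2 * π)), tsum_congr hterm,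
    ← lintegral_tsum fun k => (hmeas k).aemeasurable]
  simp_rw [ENNReal.tsum_mul_left]

lemma map_sin_withDensity (f : ℝ → ENNReal) (hf : Measurable f) :
    Measure.map Real.sin (volume.withDensity f) =
      volume.withDensity ((Set.Ioo (-1 : ℝ) 1).indicator fun x =>
        ENNReal.ofReal (√(1 - x ^ 2))⁻¹ * ∑' k : ℤ, (f (Real.arcsin x + 2 * (k : ℝ) * π) +
          f ((2 * (k : ℝ) + 1) * π - Real.arcsin x))) := by
  ext s hs
  have hs' : MeasurableSet (Real.sin ⁻¹' s) := Real.measurable_sin hs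
  rw [Measure.map_apply Real.measurable_sin hs, withDensity_apply _ hs', withDensity_apply _ hs,
    ← lintegral_indicator hs', lintegral_eq_lintegral_tsum_arcsin _ (hf.indicator hs'),
    setLIntegral_indicator measurableSet_Ioo, Set.inter_comm, ← setLIntegral_indicator hs]
  refine setLIntegral_congr_fun measurableSet_Ioo fun x hx => ?_
  have hsin := Real.sin_arcsin hx.1.le hx.2.le
  have h1 : ∀ k : ℤ, Real.sin (Real.arcsin x + 2 * (k : ℝ) * π) = x := fun k => by
    rw [show Real.arcsin x + 2 * (k : ℝ) * π = Real.arcsin x + k * (2 * π) by ring,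
      Real.sin_add_int_mul_two_pi, hsin]
  have h2 : ∀ k : ℤ, Real.sin ((2 * (k : ℝ) + 1) * π - Real.arcsin x) = x := fun k => by
    rw [show (2 * (k : ℝ) + 1) * π - Real.arcsin x = (π - Real.arcsin x) + k * (2 * π) by ring,
      Real.sin_add_int_mul_two_pi, Real.sin_pi_sub, hsin]
  by_cases hxs : x ∈ s <;> simp [Set.indicator, h1, h2, hxs]

lemma measurable_telegraphDensity (lam c t : ℝ) :
    Measurable fun x => telegraphDensity lam c x t := by
  have h0 : Measurable besselI0 := Measurable.tsum fun k => by fun_prop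
  have h1 : Measurable besselI1 := Measurable.tsum fun k => by fun_prop
  unfold telegraphDensity
  fun_prop

lemma telegraphDensity_nonneg {lam c t : ℝ} (hlam : 0 < lam) (hc : 0 < c) (ht : 0 < t) (x : ℝ) :
    0 ≤ telegraphDensity lam c x t := by
  have h0 : ∀ y : ℝ, 0 ≤ y → 0 ≤ besselI0 y := fun y hy => tsum_nonneg fun k => by positivity
  have h1 : ∀ y : ℝ, 0 ≤ y → 0 ≤ besselI1 y := fun y hy => tsum_nonneg fun k => by positivity
  have hy : 0 ≤ lam / c * √(c ^ 2 * t ^ 2 - x ^ 2) := by positivity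
  have := h0 _ hy
  have := h1 _ hy
  unfold telegraphDensity
  positivity

lemma finite_setOf_abs_add_int_mul_two_pi_lt (a r : ℝ) :
    {k : ℤ | |a + k * (2 * π)| < r}.Finite := by
  have hp := Real.two_pi_pos
  refine (Set.finite_Icc ⌊(-r - a) / (2 * π)⌋ ⌈(r - a) / (2 * π)⌉).subset fun k hk => ?_
  obtain ⟨h1, h2⟩ := abs_lt.1 (show |a + k * (2 * π)| < r from hk)
  constructor
  · have : (-r - a) / (2 * π) ≤ k := by rw [div_le_iff₀ hp]; linarith
    exact_mod_cast (Int.floor_le _).trans this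
  · have : (k : ℝ) ≤ (r - a) / (2 * π) := by rw [le_div_iff₀ hp]; linarith
    exact_mod_cast this.trans (Int.le_ceil _)

/-- Law of the sine component `Z₂(t) = sin X(t)` of the circular telegraph process:
`sin_* p_t = (e^{−λt}/2)(δ_{sin ct} + δ_{−sin ct}) + η_t·1_{(−1,1)}·Leb` where
`η_t(x) = (1−x²)^{−1/2}·∑_{k∈ℤ}[μ(arcsin x+2kπ,t)1_{|·|<ct} + μ((2k+1)π−arcsin x,t)1_{|·|<ct}]`. -/
theorem sin_telegraph_law
    (lam c t : ℝ) (hlam : 0 < lam) (hc : 0 < c) (ht : 0 < t)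
    (η : ℝ → ℝ)
    (hη : ∀ x ∈ Set.Ioo (-1 : ℝ) 1,
      η x = (Real.sqrt (1 - x ^ 2))⁻¹ *
        ∑' k : ℤ,
          ((if |Real.arcsin x + 2 * (k : ℝ) * Real.pi| < c * t then
              telegraphDensity lam c (Real.arcsin x + 2 * (k : ℝ) * Real.pi) t
            else 0) +
          (if |(2 * (k : ℝ) + 1) * Real.pi - Real.arcsin x| < c * t then
              telegraphDensity lam c ((2 * (k : ℝ) + 1) * Real.pi - Real.arcsin x) t
            else 0))) :
    Measure.map Real.sin (telegraphLaw lam c t)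
      = ENNReal.ofReal (Real.exp (-lam * t) / 2) •
            (Measure.dirac (Real.sin (c * t)) + Measure.dirac (-Real.sin (c * t))) +
          MeasureTheory.volume.withDensity fun x =>
            ENNReal.ofReal (Set.indicator (Set.Ioo (-1 : ℝ) 1) η x) := by
  set μ : ℝ → ℝ :=
    (Set.Ioo (-(c * t)) (c * t)).indicator fun y => telegraphDensity lam c y t with hμ
  have hμ_meas : Measurable μ := (measurable_telegraphDensity lam c t).indicator measurableSet_Ioo
  have hμ_nonneg : ∀ y, 0 ≤ μ y := fun y =>
    Set.indicator_nonneg (fun z _ => telegraphDensity_nonneg hlam hc ht z) y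
  have hμ_if : ∀ y, (if |y| < c * t then telegraphDensity lam c y t else 0) = μ y := fun y => by
    simp only [hμ, Set.indicator, Set.mem_Ioo, abs_lt]
  have hμ_zero : ∀ y, ¬ |y| < c * t → μ y = 0 := fun y hy => by rw [← hμ_if, if_neg hy]
  -- The cut-off makes the series over `k` a finite sum.
  have hsum : ∀ x : ℝ, Summable fun k : ℤ => μ (Real.arcsin x + 2 * (k : ℝ) * π) +
      μ ((2 * (k : ℝ) + 1) * π - Real.arcsin x) := by
    intro x
    refine Summable.add (summable_of_hasFiniteSupport ?_) (summable_of_hasFiniteSupport ?_)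
    · refine (finite_setOf_abs_add_int_mul_two_pi_lt (Real.arcsin x) (c * t)).subset fun k hk => ?_
      by_contra hlt
      refine hk (hμ_zero _ ?_)
      rwa [show Real.arcsin x + 2 * (k : ℝ) * π = Real.arcsin x + k * (2 * π) by ring]
    · refine (finite_setOf_abs_add_int_mul_two_pi_lt (π - Real.arcsin x) (c * t)).subset
        fun k hk => ?_
      by_contra hlt
      refine hk (hμ_zero _ ?_)
      rwa [show (2 * (k : ℝ) + 1) * π - Real.arcsin x = π - Real.arcsin x + k * (2 * π) by ring]
  have hlaw : telegraphLaw lam c t = ENNReal.ofReal (Real.exp (-lam * t) / 2) •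
      (Measure.dirac (-(c * t)) + Measure.dirac (c * t)) +
        volume.withDensity fun x => ENNReal.ofReal (μ x) := rfl
  rw [hlaw, Measure.map_add _ _ Real.measurable_sin, Measure.map_smul,
    Measure.map_add _ _ Real.measurable_sin, Measure.map_dirac' Real.measurable_sin,
    Measure.map_dirac' Real.measurable_sin, Real.sin_neg,
    add_comm (Measure.dirac (-Real.sin (c * t))), map_sin_withDensity _ hμ_meas.ennreal_ofReal]
  congr 2
  ext x
  by_cases hx : x ∈ Set.Ioo (-1 : ℝ) 1
  · rw [Set.indicator_of_mem hx, Set.indicator_of_mem hx, hη x hx]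
    simp_rw [hμ_if]
    rw [ENNReal.ofReal_mul (by positivity), ENNReal.ofReal_tsum_of_nonneg
      (fun k => add_nonneg (hμ_nonneg _) (hμ_nonneg _)) (hsum x)]
    simp_rw [ENNReal.ofReal_add (hμ_nonneg _) (hμ_nonneg _)]
  · rw [Set.indicator_of_notMem hx, Set.indicator_of_notMem hx, ENNReal.ofReal_zero]
end
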